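/- For every integer n ≥ 2 and all fundamental objects X, Y of the algebra C₃, one has tr(R_X) · tr(R_Y) = 2 · tr(R_X ∘ R_Y). (That is, the (1,1)-invariant of C₃ equals 2.) -/

import Mathlib

open Function Submodule

/-! Common framework: `V = ℂ^{n+1}`, `n`-ary multiplications as functions
`(Fin n → V) → V`, the action of `GL(V)` on them, orbits, and the
(n+1)-dimensional n-ary Filippov algebras of Kaygorodov–Volkov, each described
as an alternating `n`-linear map by its values on the increasing tuples of
distinct standard basis vectors (0-indexed: `bt n j` is the tuple omitting `e j`). -/

/-- The underlying space `V = ℂ^{n+1}`. -/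
abbrev nV (n : ℕ) : Type := Fin (n + 1) → ℂ

/-- The `j`-th standard basis vector of `V` (0-indexed). -/
def sb (n : ℕ) (j : Fin (n + 1)) : nV n := Pi.single j 1

/-- The increasing `n`-tuple of standard basis vectors omitting `e j`. -/
def bt (n : ℕ) (j : Fin (n + 1)) : Fin n → nV n := fun k => sb n (j.succAbove k)

/-- The action of `GL(V)` (invertible linear maps) on `n`-ary multiplications:
`(g • μ)(x₁, …, xₙ) = g (μ (g⁻¹ x₁, …, g⁻¹ xₙ))`. -/
noncomputable def glAct (n : ℕ) (g : nV n ≃ₗ[ℂ] nV n) (μ : (Fin n → nV n) → nV n) :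
    (Fin n → nV n) → nV n :=
  fun x => g (μ fun i => g.symm (x i))

/-- The `GL(V)`-orbit of an `n`-ary multiplication. -/
def glOrbit (n : ℕ) (μ : (Fin n → nV n) → nV n) : Set ((Fin n → nV n) → nV n) :=
  {ν | ∃ g : nV n ≃ₗ[ℂ] nV n, ν = glAct n g μ}

/-- The algebra `B`: `[e₂, …, e_{n+1}] = e₁` (0-indexed: the tuple omitting `e 0`
maps to `e 0`), all other increasing basis products zero. -/
def IsB (n : ℕ) (μ : AlternatingMap ℂ (nV n) (nV n) (Fin n)) : Prop :=
  μ (bt n 0) = sb n 0 ∧ ∀ j : Fin (n + 1), j ≠ 0 → μ (bt n j) = 0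

/-- The algebra `C₁`: `[e₂, …, e_{n+1}] = e₁`, `[e₁, e₃, …, e_{n+1}] = e₂`. -/
def IsC1 (n : ℕ) (μ : AlternatingMap ℂ (nV n) (nV n) (Fin n)) : Prop :=
  μ (bt n 0) = sb n 0 ∧ μ (bt n 1) = sb n 1 ∧
    ∀ j : Fin (n + 1), j ≠ 0 → j ≠ 1 → μ (bt n j) = 0

/-- The algebra `C₂(α)`: `[e₂, …, e_{n+1}] = α e₁ + e₂`, `[e₁, e₃, …, e_{n+1}] = e₂`. -/
def IsC2 (n : ℕ) (α : ℂ) (μ : AlternatingMap ℂ (nV n) (nV n) (Fin n)) : Prop :=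
  μ (bt n 0) = α • sb n 0 + sb n 1 ∧ μ (bt n 1) = sb n 1 ∧
    ∀ j : Fin (n + 1), j ≠ 0 → j ≠ 1 → μ (bt n j) = 0

/-- The algebra `C₃`: `[e₁, e₃, …, e_{n+1}] = e₁`, `[e₂, e₃, …, e_{n+1}] = e₂`. -/
def IsC3 (n : ℕ) (μ : AlternatingMap ℂ (nV n) (nV n) (Fin n)) : Prop :=
  μ (bt n 1) = sb n 0 ∧ μ (bt n 0) = sb n 1 ∧
    ∀ j : Fin (n + 1), j ≠ 0 → j ≠ 1 → μ (bt n j) = 0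

/-- The algebra `D_r`: `[e₁, …, e_{i-1}, e_{i+1}, …, e_{n+1}] = e_i` for `1 ≤ i ≤ r`
(0-indexed: the tuple omitting `e j` maps to `e j` for `j < r` and to `0` otherwise). -/
def IsD (n r : ℕ) (μ : AlternatingMap ℂ (nV n) (nV n) (Fin n)) : Prop :=
  ∀ j : Fin (n + 1), ((j : ℕ) < r → μ (bt n j) = sb n j) ∧ (r ≤ (j : ℕ) → μ (bt n j) = 0)

/-! Write `ω = det` for the volume form of the basis `e`. Expanding the bracket of `C₃` in cofactors
gives `μ x = ω(e₁, x) e₂ - ω(e₂, x) e₁`. Hence, with `d X = ω(e₁, e₂, X)`, the antisymmetry of `ω`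
shows that `R_X` maps `V` into the span of `e₁` and `e₂`, on which it is the scalar `d X`. So
`tr R_X = 2 d X` and `R_X ∘ R_Y = d X • R_Y`, and both sides of the identity are `4 (d X) (d Y)`. -/

theorem exists_eq_succAbove_comp_perm {n : ℕ} {v : Fin n → Fin (n + 1)} (hv : Injective v) :
    ∃ (j : Fin (n + 1)) (σ : Equiv.Perm (Fin n)), v = j.succAbove ∘ σ := by
  have not_surj : ¬ Surjective v := fun hs => by
    simpa using Fintype.card_le_of_surjective v hs
  obtain ⟨j, hj⟩ := not_forall.1 not_surj
  have ne_j (i : Fin n) : v i ≠ j := fun hi => hj ⟨i, hi⟩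
  choose σ hσ using fun i => Fin.exists_succAbove_eq (ne_j i)
  have σ_inj : Injective σ := fun a b hab => hv (by rw [← hσ a, ← hσ b, hab])
  exact ⟨j, Equiv.ofBijective σ (Finite.injective_iff_bijective.1 σ_inj),
    funext fun i => (hσ i).symm⟩

theorem alternatingMap_sum_apply {R M N ι κ : Type*} [Semiring R] [AddCommMonoid M] [Module R M]
    [AddCommMonoid N] [Module R N] (s : Finset κ) (f : κ → M [⋀^ι]→ₗ[R] N) (x : ι → M) :
    (∑ k ∈ s, f k) x = ∑ k ∈ s, f k x :=
  map_sum (⟨⟨fun g => g x, rfl⟩, fun _ _ => rfl⟩ : (M [⋀^ι]→ₗ[R] N) →+ N) f s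

theorem alternatingMap_ext_comp_succAbove {R M N : Type*} [CommSemiring R] [AddCommMonoid M]
    [Module R M] [AddCommGroup N] [Module R N] {n : ℕ} (b : Module.Basis (Fin (n + 1)) R M)
    {f g : M [⋀^Fin n]→ₗ[R] N}
    (h : ∀ j : Fin (n + 1), f (b ∘ j.succAbove) = g (b ∘ j.succAbove)) : f = g := by
  refine b.ext_alternating fun v hv => ?_
  obtain ⟨j, σ, rfl⟩ := exists_eq_succAbove_comp_perm hv
  change f ((b ∘ j.succAbove) ∘ σ) = g ((b ∘ j.succAbove) ∘ σ)
  rw [f.map_perm, g.map_perm, h]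

section CofactorExpansion

variable {R M : Type*} [CommRing R] [AddCommGroup M] [Module R M] {n : ℕ}
  (b : Module.Basis (Fin (n + 1)) R M)

theorem det_vecCons_comp_succAbove_self (j : Fin (n + 1)) :
    b.det (Matrix.vecCons (b j) (b ∘ j.succAbove)) = (-1) ^ (j : ℕ) := by
  have cons_eq : Matrix.vecCons (b j) (b ∘ j.succAbove) = b ∘ j.cycleRange.symm :=
    Fin.cons_removeNth_eq_comp_cycleRange_symm b j
  simp [cons_eq, AlternatingMap.map_perm, Units.smul_def, b.det_self]

theorem det_vecCons_comp_succAbove_of_ne {i j : Fin (n + 1)} (h : i ≠ j) :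
    b.det (Matrix.vecCons (b i) (b ∘ j.succAbove)) = 0 := by
  obtain ⟨k, rfl⟩ := Fin.exists_succAbove_eq h
  exact b.det.map_eq_zero_of_eq _ (i := 0) (j := k.succ) rfl (Fin.succ_ne_zero k).symm

theorem alternatingMap_apply_eq_sum_det {N : Type*} [AddCommGroup N] [Module R N]
    (f : M [⋀^Fin n]→ₗ[R] N) (x : Fin n → M) :
    f x = ∑ j : Fin (n + 1),
      ((-1) ^ (j : ℕ) * b.det (Matrix.vecCons (b j) x)) • f (b ∘ j.succAbove) := by
  have expansion : f = ∑ j : Fin (n + 1),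
      (LinearMap.toSpanSingleton R N (f (b ∘ j.succAbove))).compAlternatingMap
        ((-1 : R) ^ (j : ℕ) • b.det.curryLeft (b j)) := by
    refine alternatingMap_ext_comp_succAbove b fun k => ?_
    rw [alternatingMap_sum_apply, Finset.sum_eq_single_of_mem k (Finset.mem_univ k)]
    · simp [det_vecCons_comp_succAbove_self, smul_smul, ← mul_pow]
    · intro j _ hj
      simp [det_vecCons_comp_succAbove_of_ne b hj]
  conv_lhs => rw [expansion]
  simp [alternatingMap_sum_apply, mul_smul]

end CofactorExpansion

section RightMul

variable {R M N : Type*} [CommSemiring R] [AddCommMonoid M] [Module R M] {m : ℕ}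

section Monoid

variable [AddCommMonoid N] [Module R N]

/-- The right multiplication operator `R_X : z ↦ f (z, X)`. The values of `f` may lie in any
module, so that the coordinates of a bracket have such operators too. -/
def rightMul (f : M [⋀^Fin (m + 1)]→ₗ[R] N) (X : Fin m → M) : M →ₗ[R] N :=
  f.toMultilinearMap.toLinearMap (Fin.cons 0 X) 0

theorem rightMul_apply (f : M [⋀^Fin (m + 1)]→ₗ[R] N) (X : Fin m → M) (z : M) :
    rightMul f X z = f (Fin.cons z X) := by
  simp [rightMul, Fin.update_cons_zero]

theorem rightMul_curryLeft_self (f : M [⋀^Fin (m + 2)]→ₗ[R] N) (X : Fin m → M) (x : M) :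
    rightMul (f.curryLeft x) X x = 0 := by
  rw [rightMul_apply]
  exact DFunLike.congr_fun (f.curryLeft_same x) X

end Monoid

theorem rightMul_curryLeft_swap [AddCommGroup N] [Module R N]
    (f : M [⋀^Fin (m + 2)]→ₗ[R] N) (X : Fin m → M) (x y : M) :
    rightMul (f.curryLeft x) X y = -rightMul (f.curryLeft y) X x := by
  rw [rightMul_apply, rightMul_apply]
  change f (Matrix.vecCons x (Matrix.vecCons y X)) = -f (Matrix.vecCons y (Matrix.vecCons x X))
  rw [← Matrix.cons_cons_comp_swap_zero_one, f.map_swap _ Fin.zero_ne_one]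

end RightMul

section C3

variable {R M : Type*} [CommRing R] [AddCommGroup M] [Module R M] {m : ℕ}

/-- The multiplication table of `C₃` in a basis `b` of a free module of rank `m + 2` over a
commutative ring, the arity being `m + 1`; the basis is 0-indexed, as in `IsC3`. -/
def IsC3InBasis (b : Module.Basis (Fin (m + 2)) R M) (μ : M [⋀^Fin (m + 1)]→ₗ[R] M) : Prop :=
  μ (b ∘ Fin.succAbove 1) = b 0 ∧ μ (b ∘ Fin.succAbove 0) = b 1 ∧
    ∀ j : Fin (m + 2), j ≠ 0 → j ≠ 1 → μ (b ∘ j.succAbove) = 0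

theorem IsC3.isC3InBasis {μ : nV (m + 1) [⋀^Fin (m + 1)]→ₗ[ℂ] nV (m + 1)}
    (hμ : IsC3 (m + 1) μ) : IsC3InBasis (Pi.basisFun ℂ (Fin (m + 2))) μ := by
  have basisFun_eq : ⇑(Pi.basisFun ℂ (Fin (m + 2))) = sb (m + 1) :=
    funext fun j => Pi.basisFun_apply ℂ _ j
  rw [IsC3InBasis, basisFun_eq]
  exact hμ

/-- The scalar `d X = ω(e₁, e₂, X)` by which the operator `R_X` of `C₃` acts on the span of `e₁`
and `e₂`. -/
noncomputable def rightMulScalar (b : Module.Basis (Fin (m + 2)) R M) (X : Fin m → M) : R :=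
  rightMul (b.det.curryLeft (b 0)) X (b 1)

namespace IsC3InBasis

variable {b : Module.Basis (Fin (m + 2)) R M} {μ : M [⋀^Fin (m + 1)]→ₗ[R] M}

theorem apply_eq (hμ : IsC3InBasis b μ) (x : Fin (m + 1) → M) :
    μ x = b.det (Matrix.vecCons (b 0) x) • b 1 - b.det (Matrix.vecCons (b 1) x) • b 0 := by
  obtain ⟨apply_one, apply_zero, apply_else⟩ := hμ
  have apply_succ_succ (k : Fin m) : μ (b ∘ k.succ.succ.succAbove) = 0 :=
    apply_else _ (Fin.succ_ne_zero _) (Fin.succ_succ_ne_one k)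
  rw [alternatingMap_apply_eq_sum_det b, Fin.sum_univ_succ, Fin.sum_univ_succ,
    Fin.succ_zero_eq_one, apply_zero, apply_one]
  simp [apply_succ_succ, sub_eq_add_neg]

theorem rightMul_eq (hμ : IsC3InBasis b μ) (X : Fin m → M) :
    rightMul μ X = (rightMul (b.det.curryLeft (b 0)) X).smulRight (b 1) -
      (rightMul (b.det.curryLeft (b 1)) X).smulRight (b 0) := by
  ext z
  simp only [rightMul_apply, hμ.apply_eq, AlternatingMap.curryLeft_apply_apply,
    LinearMap.sub_apply, LinearMap.smulRight_apply]

theorem trace_rightMul (hμ : IsC3InBasis b μ) (X : Fin m → M) :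
    LinearMap.trace R M (rightMul μ X) = 2 * rightMulScalar b X := by
  have := Module.Free.of_basis b
  have := Module.Finite.of_basis b
  rw [hμ.rightMul_eq, map_sub, LinearMap.trace_smulRight, LinearMap.trace_smulRight,
    rightMul_curryLeft_swap _ X (b 1), sub_neg_eq_add, rightMulScalar, two_mul]

theorem rightMul_basis_zero (hμ : IsC3InBasis b μ) (X : Fin m → M) :
    rightMul μ X (b 0) = rightMulScalar b X • b 0 := by
  simp [hμ.rightMul_eq, rightMul_curryLeft_self, rightMul_curryLeft_swap _ X (b 1),
    rightMulScalar]

theorem rightMul_basis_one (hμ : IsC3InBasis b μ) (X : Fin m → M) :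
    rightMul μ X (b 1) = rightMulScalar b X • b 1 := by
  simp [hμ.rightMul_eq, rightMul_curryLeft_self, rightMulScalar]

theorem rightMul_comp_rightMul (hμ : IsC3InBasis b μ) (X Y : Fin m → M) :
    rightMul μ X ∘ₗ rightMul μ Y = rightMulScalar b X • rightMul μ Y := by
  ext z
  rw [LinearMap.comp_apply, LinearMap.smul_apply, hμ.rightMul_eq Y]
  simp only [LinearMap.sub_apply, LinearMap.smulRight_apply, map_sub, map_smul,
    hμ.rightMul_basis_zero, hμ.rightMul_basis_one, smul_sub, smul_comm (rightMulScalar b X)]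

end IsC3InBasis

theorem C3_trace_invariant_general {b : Module.Basis (Fin (m + 2)) R M}
    {μ : M [⋀^Fin (m + 1)]→ₗ[R] M} (hμ : IsC3InBasis b μ) (X Y : Fin m → M) :
    LinearMap.trace R M (rightMul μ X) * LinearMap.trace R M (rightMul μ Y) =
      2 * LinearMap.trace R M (rightMul μ X ∘ₗ rightMul μ Y) := by
  rw [hμ.rightMul_comp_rightMul, map_smul, smul_eq_mul, hμ.trace_rightMul, hμ.trace_rightMul]
  ring

end C3

/-- For every integer `n = m + 1 ≥ 2` and all fundamental objects `X, Y` of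
`C₃`, one has `tr(R_X) · tr(R_Y) = 2 · tr(R_X ∘ R_Y)`, i.e. the `(1,1)`-invariant of `C₃`
equals `2`. -/
theorem C3_trace_invariant (m : ℕ) (hm : 1 ≤ m)
    (μ : AlternatingMap ℂ (nV (m + 1)) (nV (m + 1)) (Fin (m + 1))) (hμ : IsC3 (m + 1) μ)
    (X Y : Fin m → nV (m + 1)) (RX RY : nV (m + 1) →ₗ[ℂ] nV (m + 1))
    (hRX : ∀ z : nV (m + 1), RX z = μ (Fin.cons z X))
    (hRY : ∀ z : nV (m + 1), RY z = μ (Fin.cons z Y)) :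
    LinearMap.trace ℂ (nV (m + 1)) RX * LinearMap.trace ℂ (nV (m + 1)) RY =
      2 * LinearMap.trace ℂ (nV (m + 1)) (RX ∘ₗ RY) := by
  obtain rfl : RX = rightMul μ X := LinearMap.ext fun z => (hRX z).trans (rightMul_apply μ X z).symm
  obtain rfl : RY = rightMul μ Y := LinearMap.ext fun z => (hRY z).trans (rightMul_apply μ Y z).symm
  exact C3_trace_invariant_general hμ.isC3InBasis X Y
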